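/- arXiv:1709.04889 — 6 statements merged into one kernel-verified Lean document; each statement's English description precedes it below -/
import Mathlib

section
/- Let ε > 0, let u ∈ U, and let φ : [0,ε] → ℝⁿ be continuous and differentiable at every t ∈ (0,ε) with φ'(t) = v_{φ(t)}(u). Then ‖(φ(ε) − φ(0))/ε − v_{φ(ε)}(u)‖ ≤ M₀M₁(m+1)²ε/2. -/
/-!
Write `v x = f x + ∑ i, u i • g i x`. Since `|u i| ≤ 1`, the field `v` is bounded by `(m + 1) M₀` and
Lipschitz with constant `(m + 1) M₁`. The mean value inequality applied to `φ` gives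
`‖φ ε - φ t‖ ≤ (m + 1) M₀ (ε - t)`, so the curve `t ↦ φ t - t • v (φ ε)` has derivative of norm at most
`(m + 1)² M₀ M₁ (ε - t)`. Applying the mean value inequality to this curve, with majorant
`t ↦ -(m + 1)² M₀ M₁ (ε - t)² / 2`, and dividing by `ε` gives the claim. Both applications use
`norm_sub_le_of_hasDerivAt_Ioo`, which needs the derivative only on the open interval.
-/

/-- Mean value inequality with a differentiable majorant `B`, where `F` is differentiable only on the
open interval: the inequality on `[s, b]` is passed to the limit `s → a⁺`. -/
lemma norm_sub_le_of_hasDerivAt_Ioo {E : Type*} [NormedAddCommGroup E] [NormedSpace ℝ E]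
    {F F' : ℝ → E} {B B' : ℝ → ℝ} {a b : ℝ} (hab : a < b)
    (hF : ContinuousOn F (Set.Icc a b))
    (hF' : ∀ t ∈ Set.Ioo a b, HasDerivAt F (F' t) t)
    (hB : ∀ t, HasDerivAt B (B' t) t)
    (bound : ∀ t ∈ Set.Ioo a b, ‖F' t‖ ≤ B' t) :
    ‖F b - F a‖ ≤ B b - B a := by
  have key : ∀ s ∈ Set.Ioo a b, ‖F b - F s‖ ≤ B b - B s := by
    intro s hs
    refine image_norm_le_of_norm_deriv_right_le_deriv_boundary
      (f := fun t => F t - F s) (f' := F') (B := fun t => B t - B s) (B' := B')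
      (a := s) (b := b) ?_ ?_ (by simp) (fun t => (hB t).sub_const _) ?_
      (Set.right_mem_Icc.2 hs.2.le)
    · exact (hF.mono (Set.Icc_subset_Icc_left hs.1.le)).sub continuousOn_const
    · intro t ht
      exact ((hF' t ⟨hs.1.trans_le ht.1, ht.2⟩).sub_const _).hasDerivWithinAt
    · intro t ht
      exact bound t ⟨hs.1.trans_le ht.1, ht.2⟩
  have hFa : Filter.Tendsto F (nhdsWithin a (Set.Ioo a b)) (nhds (F a)) :=
    (hF a (Set.left_mem_Icc.2 hab.le)).mono Set.Ioo_subset_Icc_self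
  have hBa : Filter.Tendsto B (nhdsWithin a (Set.Ioo a b)) (nhds (B a)) :=
    (hB a).continuousAt.continuousWithinAt
  have : (nhdsWithin a (Set.Ioo a b)).NeBot := left_nhdsWithin_Ioo_neBot hab
  exact le_of_tendsto_of_tendsto (tendsto_const_nhds.sub hFa).norm (tendsto_const_nhds.sub hBa)
    (Filter.eventually_of_mem self_mem_nhdsWithin key)

lemma norm_add_sum_smul_le {E : Type*} [NormedAddCommGroup E] [NormedSpace ℝ E] {m : ℕ}
    {c : Fin m → ℝ} (hc : ∀ i, |c i| ≤ 1) {a : E} {b : Fin m → E} {M : ℝ}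
    (ha : ‖a‖ ≤ M) (hb : ∀ i, ‖b i‖ ≤ M) :
    ‖a + ∑ i, c i • b i‖ ≤ (m + 1) * M := by
  have hs : ‖∑ i, c i • b i‖ ≤ ∑ _i : Fin m, M := by
    refine norm_sum_le_of_le _ fun i _ => ?_
    rw [norm_smul, Real.norm_eq_abs]
    exact (mul_le_of_le_one_left (norm_nonneg _) (hc i)).trans (hb i)
  rw [Finset.sum_const, Finset.card_univ, Fintype.card_fin, nsmul_eq_mul] at hs
  linarith [norm_add_le a (∑ i, c i • b i)]

/-- Let ε > 0, u ∈ U, and φ : [0,ε] → ℝⁿ continuous, differentiable on (0,ε)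
with φ'(t) = v_{φ(t)}(u). Then ‖(φ(ε) − φ(0))/ε − v_{φ(ε)}(u)‖ ≤ M₀M₁(m+1)²ε/2. -/
theorem finite_difference_approximation
    (n m : ℕ) (hm : 1 ≤ m) (M₀ M₁ : ℝ) (hM₀ : 0 ≤ M₀) (hM₁ : 0 ≤ M₁)
    (f : EuclideanSpace ℝ (Fin n) → EuclideanSpace ℝ (Fin n))
    (g : Fin m → EuclideanSpace ℝ (Fin n) → EuclideanSpace ℝ (Fin n))
    (hf : ∀ x, ‖f x‖ ≤ M₀) (hg : ∀ i x, ‖g i x‖ ≤ M₀)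
    (hfL : ∀ x y, ‖f x - f y‖ ≤ M₁ * ‖x - y‖)
    (hgL : ∀ i x y, ‖g i x - g i y‖ ≤ M₁ * ‖x - y‖)
    (ε : ℝ) (hε : 0 < ε)
    (u : EuclideanSpace ℝ (Fin m)) (hu : ∀ i, |u i| ≤ 1)
    (φ : ℝ → EuclideanSpace ℝ (Fin n))
    (hφc : ContinuousOn φ (Set.Icc 0 ε))
    (hφd : ∀ t ∈ Set.Ioo (0 : ℝ) ε,
      HasDerivAt φ (f (φ t) + ∑ i, u i • g i (φ t)) t) :
    ‖ε⁻¹ • (φ ε - φ 0) - (f (φ ε) + ∑ i, u i • g i (φ ε))‖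
      ≤ M₀ * M₁ * (m + 1) ^ 2 * ε / 2 := by
  set v : EuclideanSpace ℝ (Fin n) → EuclideanSpace ℝ (Fin n) :=
    fun x => f x + ∑ i, u i • g i x with hv
  have hvb : ∀ x, ‖v x‖ ≤ (m + 1) * M₀ := fun x =>
    norm_add_sum_smul_le hu (hf x) (fun i => hg i x)
  have hvL : ∀ x y, ‖v x - v y‖ ≤ (m + 1) * (M₁ * ‖x - y‖) := by
    intro x y
    have h : v x - v y = (f x - f y) + ∑ i, u i • (g i x - g i y) := by
      simp only [hv, smul_sub, Finset.sum_sub_distrib]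
      abel
    rw [h]
    exact norm_add_sum_smul_le hu (hfL x y) (fun i => hgL i x y)
  have hφL : ∀ t ∈ Set.Ioo (0 : ℝ) ε, ‖φ t - φ ε‖ ≤ (m + 1) * M₀ * (ε - t) := by
    intro t ht
    have h := norm_sub_le_of_hasDerivAt_Ioo (F := φ) (F' := fun s => v (φ s))
      (B := fun s => (m + 1) * M₀ * s) (B' := fun _ => (m + 1) * M₀) ht.2
      (hφc.mono (Set.Icc_subset_Icc_left ht.1.le))
      (fun s hs => hφd s ⟨ht.1.trans hs.1, hs.2⟩)
      (fun s => by simpa using (hasDerivAt_id s).const_mul ((m + 1) * M₀))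
      (fun s _ => hvb _)
    rw [norm_sub_rev]
    linarith
  have hmain := norm_sub_le_of_hasDerivAt_Ioo (F := fun t => φ t - t • v (φ ε))
    (F' := fun t => v (φ t) - v (φ ε))
    (B := fun t => -(M₀ * M₁ * (m + 1) ^ 2 / 2 * (ε - t) ^ 2))
    (B' := fun t => M₀ * M₁ * (m + 1) ^ 2 * (ε - t)) hε
    (hφc.sub (by fun_prop))
    (fun t ht => by
      have h := (hφd t ht).sub ((hasDerivAt_id t).smul_const (v (φ ε)))
      rw [one_smul] at h
      exact h)
    (fun t => by
      have h := ((((hasDerivAt_id t).const_sub ε).pow 2).const_mul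
        (M₀ * M₁ * (m + 1) ^ 2 / 2)).neg
      refine HasDerivAt.congr_deriv h ?_
      simp only [id_eq]
      push_cast
      ring)
    (fun t ht => by
      calc ‖v (φ t) - v (φ ε)‖ ≤ (m + 1) * (M₁ * ‖φ t - φ ε‖) := hvL _ _
        _ ≤ (m + 1) * (M₁ * ((m + 1) * M₀ * (ε - t))) := by
          gcongr
          exact hφL t ht
        _ = M₀ * M₁ * (m + 1) ^ 2 * (ε - t) := by ring)
  have heq : ε⁻¹ • (φ ε - φ 0) - v (φ ε)
      = ε⁻¹ • ((φ ε - ε • v (φ ε)) - (φ 0 - (0 : ℝ) • v (φ ε))) := by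
    rw [zero_smul, sub_zero, sub_right_comm, smul_sub ε⁻¹ (φ ε - φ 0), inv_smul_smul₀ hε.ne']
  change ‖ε⁻¹ • (φ ε - φ 0) - v (φ ε)‖ ≤ _
  rw [heq, norm_smul, Real.norm_eq_abs, abs_of_pos (inv_pos.2 hε), inv_mul_le_iff₀ hε]
  refine hmain.trans (le_of_eq ?_)
  ring
end

section
/- Let 0 < δ ≤ 1, let u* ∈ U, let s₁, …, s_m ∈ {−1,1}, and set u⁰ = u* and uʲ = u* + sⱼδeⱼ for j ∈ {1,…,m}, assuming uʲ ∈ U for all j. Let φ : [0,(m+1)ε] → ℝⁿ be the piecewise-controlled trajectory corresponding to ε > 0 and the controls u⁰, …, uᵐ, and set xʲ = φ(jε) for j ∈ {0,…,m+1} and x = xᵐ⁺¹. Let u ∈ U and let λ₀, …, λ_m ∈ ℝ satisfy λ₀ + ⋯ + λ_m = 1 and u = λ₀u⁰ + ⋯ + λ_muᵐ. Then ‖v_x(u) − Σ_{j=0}^m λⱼ(xʲ⁺¹ − xʲ)/ε‖ ≤ 2M₀M₁(m+1)³ε·(4m^{3/2} + δ)/δ. -/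
/-!
The velocity `v_x(w) = f x + ∑ i, w i • g i x` is affine in `w`, so `v_x(u) = ∑ λⱼ v_x(uʲ)`, and the
error is at most `∑ |λⱼ|` times the largest error of a single difference quotient.

For admissible `w` the speed is at most `(m+1)M₀` and `v_·(w)` is `(m+1)M₁`-Lipschitz
(`norm_velocity_le`, `norm_velocity_sub_le`). The mean value inequality (`norm_sub_le_of_deriv_Ioo`)
thus keeps the whole trajectory within `(m+1)²M₀ε` of its endpoint `x` (`norm_endpoint_sub_le`), and,
applied to `t ↦ φ t - t • v_x(uʲ)`, bounds the error of each quotient by `(m+1)³M₀M₁ε`.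

Reading `u = ∑ λⱼuʲ` in coordinate `j` gives `sⱼδλⱼ₊₁ = uⱼ - u*ⱼ`, hence `|λⱼ₊₁| ≤ 2/δ` and
`|λ₀| ≤ 1 + 2m/δ`, so `∑ |λⱼ| ≤ (4m + δ)/δ` (`sum_abs_lam_le`), which is more than enough.
-/

/-- The mean value inequality with differentiability assumed only in the open interval. -/
lemma norm_sub_le_of_deriv_Ioo {E : Type*} [NormedAddCommGroup E] [InnerProductSpace ℝ E]
    {h h' : ℝ → E} {a b C : ℝ} (hab : a ≤ b) (hc : ContinuousOn h (Set.Icc a b))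
    (hd : ∀ t ∈ Set.Ioo a b, HasDerivAt h (h' t) t)
    (hC : ∀ t ∈ Set.Ioo a b, ‖h' t‖ ≤ C) : ‖h b - h a‖ ≤ C * (b - a) := by
  rcases hab.eq_or_lt with rfl | hlt
  · simp
  -- The scalar mean value theorem applies to the component of `h` along the total increment.
  obtain ⟨c, hcm, hceq⟩ := exists_hasDerivAt_eq_slope
    (fun t => inner ℝ (h b - h a) (h t)) (fun t => inner ℝ (h b - h a) (h' t)) hlt
    (continuousOn_const.inner hc)
    (fun t ht => by simpa using (hasDerivAt_const t (h b - h a)).inner ℝ (hd t ht))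
  have hba : 0 < b - a := sub_pos.2 hlt
  rw [eq_div_iff hba.ne', ← inner_sub_right, real_inner_self_eq_norm_sq] at hceq
  have h1 : inner ℝ (h b - h a) (h' c) ≤ ‖h b - h a‖ * C :=
    (real_inner_le_norm _ _).trans (mul_le_mul_of_nonneg_left (hC c hcm) (norm_nonneg _))
  have hC0 : 0 ≤ C := (norm_nonneg _).trans (hC c hcm)
  have h2 := mul_le_mul_of_nonneg_right h1 hba.le
  by_contra! hlt'
  have h3 : 0 < ‖h b - h a‖ := lt_of_le_of_lt (by positivity) hlt'
  nlinarith

lemma norm_add_sum_smul_le_s3 {E : Type*} [NormedAddCommGroup E] [NormedSpace ℝ E] {m : ℕ}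
    {p : E} {q : Fin m → E} {w : Fin m → ℝ} {C : ℝ} (hp : ‖p‖ ≤ C) (hq : ∀ i, ‖q i‖ ≤ C)
    (hw : ∀ i, |w i| ≤ 1) : ‖p + ∑ i, w i • q i‖ ≤ (m + 1) * C := by
  have h1 : ‖∑ i, w i • q i‖ ≤ ∑ _i : Fin m, C := by
    refine norm_sum_le_of_le _ fun i _ => ?_
    rw [norm_smul, Real.norm_eq_abs]
    nlinarith [hw i, hq i, norm_nonneg (q i)]
  have h2 := norm_add_le p (∑ i, w i • q i)
  simp only [Finset.sum_const, Finset.card_univ, Fintype.card_fin, nsmul_eq_mul] at h1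
  linarith

section Velocity

variable {E : Type*} [NormedAddCommGroup E] [InnerProductSpace ℝ E] {m : ℕ}

/-- The velocity `v_x(w)` at the point `x` under the control `w`. -/
def velocity (f : E → E) (g : Fin m → E → E) (w : EuclideanSpace ℝ (Fin m)) (x : E) : E :=
  f x + ∑ i, w i • g i x

variable {f : E → E} {g : Fin m → E → E} {w : EuclideanSpace ℝ (Fin m)} {M₀ M₁ : ℝ}

lemma norm_velocity_le (hf : ∀ x, ‖f x‖ ≤ M₀) (hg : ∀ i x, ‖g i x‖ ≤ M₀)
    (hw : ∀ i, |w i| ≤ 1) (x : E) : ‖velocity f g w x‖ ≤ (m + 1) * M₀ :=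
  norm_add_sum_smul_le_s3 (hf x) (fun i => hg i x) hw

lemma norm_velocity_sub_le (hfL : ∀ x y, ‖f x - f y‖ ≤ M₁ * ‖x - y‖)
    (hgL : ∀ i x y, ‖g i x - g i y‖ ≤ M₁ * ‖x - y‖) (hw : ∀ i, |w i| ≤ 1) (x y : E) :
    ‖velocity f g w x - velocity f g w y‖ ≤ (m + 1) * (M₁ * ‖x - y‖) := by
  have := norm_add_sum_smul_le_s3 (hfL x y) (fun i => hgL i x y) hw
  convert this using 2
  simp only [velocity, smul_sub, Finset.sum_sub_distrib]
  abel

/-- Affinity of the velocity in the control. -/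
lemma velocity_affine {uc : ℕ → EuclideanSpace ℝ (Fin m)} {lam : ℕ → ℝ} {N : ℕ}
    (hlam : ∑ j ∈ Finset.range N, lam j = 1) (x : E) :
    velocity f g (∑ j ∈ Finset.range N, lam j • uc j) x
      = ∑ j ∈ Finset.range N, lam j • velocity f g (uc j) x := by
  simp only [velocity, smul_add, Finset.sum_add_distrib, ← Finset.sum_smul, hlam, one_smul,
    Finset.smul_sum]
  rw [Finset.sum_comm]
  congr 1
  refine Finset.sum_congr rfl fun i _ => ?_
  simp [Finset.sum_smul, smul_smul]

end Velocity

/-- A curve that on each of the `m+1` intervals of length `ε` stays within `K ε` of its value at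
the right end of that interval stays within `K (m+1) ε` of its final endpoint throughout. -/
lemma norm_endpoint_sub_le {E : Type*} [NormedAddCommGroup E] {φ : ℝ → E} {m : ℕ} {K ε : ℝ}
    (hK : 0 ≤ K) (hε : 0 < ε)
    (hseg : ∀ j : ℕ, j ≤ m → ∀ t ∈ Set.Icc ((j : ℝ) * ε) ((j + 1 : ℝ) * ε),
      ‖φ ((j + 1 : ℝ) * ε) - φ t‖ ≤ K * ε)
    {j : ℕ} (hj : j ≤ m) {t : ℝ} (ht : t ∈ Set.Icc ((j : ℝ) * ε) ((j + 1 : ℝ) * ε)) :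
    ‖φ ((m + 1 : ℝ) * ε) - φ t‖ ≤ K * ((m + 1) * ε) := by
  have key : ∀ d j : ℕ, j + d = m → ∀ t ∈ Set.Icc ((j : ℝ) * ε) ((j + 1 : ℝ) * ε),
      ‖φ ((m + 1 : ℝ) * ε) - φ t‖ ≤ K * ((d + 1) * ε) := by
    intro d
    induction d with
    | zero =>
      intro j hj t ht
      obtain rfl : j = m := by omega
      simpa using hseg j le_rfl t ht
    | succ d ih =>
      intro j hj t ht
      have h1 := hseg j (by omega) t ht
      have h2 := ih (j + 1) (by omega) (((j + 1 : ℕ) : ℝ) * ε)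
        ⟨le_rfl, by nlinarith⟩
      push_cast at h2 ⊢
      have h3 := norm_sub_le_norm_sub_add_norm_sub (φ ((m + 1 : ℝ) * ε))
        (φ ((j + 1 : ℝ) * ε)) (φ t)
      linarith
  obtain ⟨d, rfl⟩ := Nat.exists_eq_add_of_le hj
  refine (key d j rfl t ht).trans ?_
  push_cast
  gcongr
  linarith [(Nat.cast_nonneg j : (0 : ℝ) ≤ j)]

/-- The barycentric coordinates of an admissible control with respect to the wiggled controls
have `ℓ¹` norm at most `(4m + δ)/δ`: all but the first are bounded by `2/δ`, and the first is
`1` minus the sum of the others. -/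
lemma sum_abs_lam_le {m : ℕ} {δ : ℝ} (hδ0 : 0 < δ) {ustar u : EuclideanSpace ℝ (Fin m)}
    (hustar : ∀ i, |ustar i| ≤ 1) (hu : ∀ i, |u i| ≤ 1)
    {s : Fin m → ℝ} (hs : ∀ j, s j = 1 ∨ s j = -1) {uc : ℕ → EuclideanSpace ℝ (Fin m)}
    (huc0 : uc 0 = ustar)
    (hucj : ∀ j : Fin m, uc ((j : ℕ) + 1) = ustar + (s j * δ) • EuclideanSpace.single j 1)
    {lam : ℕ → ℝ} (hlamsum : ∑ j ∈ Finset.range (m + 1), lam j = 1)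
    (hlamrep : u = ∑ j ∈ Finset.range (m + 1), lam j • uc j) :
    ∑ j ∈ Finset.range (m + 1), |lam j| ≤ (4 * m + δ) / δ := by
  rw [Finset.sum_range_succ', Finset.sum_range] at hlamsum hlamrep ⊢
  have hcoord : ∀ i : Fin m, u i - ustar i = lam (i + 1) * (s i * δ) := by
    intro i
    have h1 : u i = (∑ j : Fin m, lam (j + 1)) * ustar i + lam (i + 1) * (s i * δ)
        + lam 0 * ustar i := by
      rw [hlamrep]
      simp [hucj, huc0, Finset.sum_add_distrib, Finset.sum_mul, Pi.single_apply]
    have h2 : lam 0 = 1 - ∑ j : Fin m, lam (j + 1) := by linarith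
    rw [h1, h2]
    ring
  have hlam : ∀ i : Fin m, |lam (i + 1)| ≤ 2 / δ := by
    intro i
    have hsi : |s i| = 1 := by rcases hs i with h | h <;> simp [h]
    have h1 : |lam (i + 1)| * δ = |u i - ustar i| := by
      rw [hcoord, abs_mul, abs_mul, hsi, abs_of_pos hδ0, one_mul]
    rw [le_div_iff₀ hδ0, h1]
    linarith [abs_sub (u i) (ustar i), hustar i, hu i]
  have hS : ∑ i : Fin m, |lam (i + 1)| ≤ m * (2 / δ) := by
    simpa using Finset.sum_le_sum fun i (_ : i ∈ Finset.univ) => hlam i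
  have h0 : |lam 0| ≤ 1 + ∑ i : Fin m, |lam (i + 1)| := by
    have h2 : lam 0 = 1 - ∑ j : Fin m, lam (j + 1) := by linarith
    rw [h2]
    have h3 := abs_sub (1 : ℝ) (∑ j : Fin m, lam (j + 1))
    have h4 := Finset.abs_sum_le_sum_abs (fun j : Fin m => lam (j + 1)) Finset.univ
    rw [abs_one] at h3
    linarith
  have h5 : (4 * m + δ) / δ = 2 * (m * (2 / δ)) + 1 := by field_simp; ring
  rw [h5]
  linarith

/-- **Theorem 1 of the paper.** With the wiggled controls
u⁰ = u*, uʲ = u* + sⱼδeⱼ and the corresponding piecewise-controlled trajectory φ,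
setting xʲ = φ(jε) and x = xᵐ⁺¹, for any u ∈ U with affine representation
u = Σλⱼuʲ, Σλⱼ = 1, we have
‖v_x(u) − Σλⱼ(xʲ⁺¹ − xʲ)/ε‖ ≤ 2M₀M₁(m+1)³ε(4m^{3/2} + δ)/δ. -/
theorem learning_approximation_bound
    (n m : ℕ) (hm : 1 ≤ m) (M₀ M₁ : ℝ) (hM₀ : 0 ≤ M₀) (hM₁ : 0 ≤ M₁)
    (f : EuclideanSpace ℝ (Fin n) → EuclideanSpace ℝ (Fin n))
    (g : Fin m → EuclideanSpace ℝ (Fin n) → EuclideanSpace ℝ (Fin n))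
    (hf : ∀ x, ‖f x‖ ≤ M₀) (hg : ∀ i x, ‖g i x‖ ≤ M₀)
    (hfL : ∀ x y, ‖f x - f y‖ ≤ M₁ * ‖x - y‖)
    (hgL : ∀ i x y, ‖g i x - g i y‖ ≤ M₁ * ‖x - y‖)
    (δ : ℝ) (hδ0 : 0 < δ) (hδ1 : δ ≤ 1)
    (ustar : EuclideanSpace ℝ (Fin m)) (hustar : ∀ i, |ustar i| ≤ 1)
    (s : Fin m → ℝ) (hs : ∀ j, s j = 1 ∨ s j = -1)
    (uc : ℕ → EuclideanSpace ℝ (Fin m))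
    (huc0 : uc 0 = ustar)
    (hucj : ∀ j : Fin m, uc ((j : ℕ) + 1) = ustar + (s j * δ) • EuclideanSpace.single j 1)
    (hucU : ∀ j, j ≤ m → ∀ i, |uc j i| ≤ 1)
    (ε : ℝ) (hε : 0 < ε)
    (φ : ℝ → EuclideanSpace ℝ (Fin n))
    (hφc : ContinuousOn φ (Set.Icc 0 ((m + 1) * ε)))
    (hφd : ∀ j, j ≤ m → ∀ t ∈ Set.Ioo ((j : ℝ) * ε) ((j + 1 : ℝ) * ε),
      HasDerivAt φ (f (φ t) + ∑ i, uc j i • g i (φ t)) t)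
    (u : EuclideanSpace ℝ (Fin m)) (hu : ∀ i, |u i| ≤ 1)
    (lam : ℕ → ℝ)
    (hlamsum : ∑ j ∈ Finset.range (m + 1), lam j = 1)
    (hlamrep : u = ∑ j ∈ Finset.range (m + 1), lam j • uc j) :
    ‖(f (φ (((m : ℝ) + 1) * ε)) + ∑ i, u i • g i (φ (((m : ℝ) + 1) * ε)))
        - ∑ j ∈ Finset.range (m + 1),
            lam j • (ε⁻¹ • (φ (((j : ℝ) + 1) * ε) - φ ((j : ℝ) * ε)))‖
      ≤ 2 * M₀ * M₁ * (m + 1) ^ 3 * ε * (4 * (m * Real.sqrt m) + δ) / δ := by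
  have hm1 : (1 : ℝ) ≤ m := by exact_mod_cast hm
  set K : ℝ := (m + 1) * M₀ with hKdef
  have hK : 0 ≤ K := by positivity
  have hsub : ∀ j : ℕ, j ≤ m →
      Set.Icc ((j : ℝ) * ε) ((j + 1 : ℝ) * ε) ⊆ Set.Icc 0 ((m + 1) * ε) := by
    intro j hj
    have hj' : (j : ℝ) ≤ m := by exact_mod_cast hj
    exact Set.Icc_subset_Icc (by positivity) (by gcongr)
  have hseg : ∀ j : ℕ, j ≤ m → ∀ t ∈ Set.Icc ((j : ℝ) * ε) ((j + 1 : ℝ) * ε),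
      ‖φ ((j + 1 : ℝ) * ε) - φ t‖ ≤ K * ε := by
    intro j hj t ht
    refine (norm_sub_le_of_deriv_Ioo (h' := fun t => velocity f g (uc j) (φ t)) ht.2
      (hφc.mono ((Set.Icc_subset_Icc_left ht.1).trans (hsub j hj)))
      (fun r hr => hφd j hj r ⟨ht.1.trans_lt hr.1, hr.2⟩)
      (fun r _ => norm_velocity_le hf hg (hucU j hj) (φ r))).trans ?_
    exact mul_le_mul_of_nonneg_left (by linarith [ht.1]) hK
  set x := φ (((m : ℝ) + 1) * ε) with hx
  set B : ℝ := (m + 1) * (M₁ * (K * ((m + 1) * ε))) with hB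
  have hB0 : 0 ≤ B := by positivity
  have hquot : ∀ j : ℕ, j ≤ m → ‖velocity f g (uc j) x
      - ε⁻¹ • (φ (((j : ℝ) + 1) * ε) - φ ((j : ℝ) * ε))‖ ≤ B := by
    intro j hj
    have h1 := norm_sub_le_of_deriv_Ioo
      (h := fun t => φ t - t • velocity f g (uc j) x)
      (h' := fun t => velocity f g (uc j) (φ t) - velocity f g (uc j) x) (C := B)
      (show (j : ℝ) * ε ≤ (j + 1 : ℝ) * ε by nlinarith)
      ((hφc.mono (hsub j hj)).sub (by fun_prop))
      (fun t ht => by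
        have h := (hφd j hj t ht).sub ((hasDerivAt_id t).smul_const (velocity f g (uc j) x))
        rw [one_smul] at h
        exact h)
      (fun t ht => by
        refine (norm_velocity_sub_le hfL hgL (hucU j hj) (φ t) x).trans ?_
        rw [norm_sub_rev]
        have := norm_endpoint_sub_le hK hε hseg hj (Set.Ioo_subset_Icc_self ht)
        rw [hB]
        gcongr)
    have h2 : velocity f g (uc j) x - ε⁻¹ • (φ (((j : ℝ) + 1) * ε) - φ ((j : ℝ) * ε))
        = -(ε⁻¹ • ((φ (((j : ℝ) + 1) * ε) - (((j : ℝ) + 1) * ε) • velocity f g (uc j) x)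
          - (φ ((j : ℝ) * ε) - ((j : ℝ) * ε) • velocity f g (uc j) x))) := by
      match_scalars <;> field_simp
      ring
    rw [h2, norm_neg, norm_smul, Real.norm_eq_abs, abs_of_pos (inv_pos.2 hε),
      inv_mul_le_iff₀ hε]
    refine h1.trans (le_of_eq ?_)
    ring
  have hsum := sum_abs_lam_le hδ0 hustar hu hs huc0 hucj hlamsum hlamrep
  change ‖velocity f g u x - _‖ ≤ _
  rw [hlamrep, velocity_affine hlamsum, ← Finset.sum_sub_distrib]
  have hsqrt : 1 ≤ Real.sqrt m := Real.one_le_sqrt.2 hm1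
  calc _ ≤ ∑ j ∈ Finset.range (m + 1), |lam j| * B := by
        refine norm_sum_le_of_le _ fun j hj => ?_
        rw [← smul_sub, norm_smul, Real.norm_eq_abs]
        exact mul_le_mul_of_nonneg_left
          (hquot j (Nat.lt_succ_iff.1 (Finset.mem_range.1 hj))) (abs_nonneg _)
    _ = (∑ j ∈ Finset.range (m + 1), |lam j|) * B := by rw [Finset.sum_mul]
    _ ≤ (2 * ((4 * (m * Real.sqrt m) + δ) / δ)) * B := by
        refine mul_le_mul_of_nonneg_right (hsum.trans ?_) hB0
        have h1 : (4 * m + δ) / δ ≤ (4 * (m * Real.sqrt m) + δ) / δ := by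
          gcongr
          nlinarith
        have h2 : 0 ≤ (4 * (m * Real.sqrt m) + δ) / δ := by positivity
        linarith
    _ = _ := by rw [hB, hKdef]; ring
end

section
/- Suppose the goodness function G has Lipschitz constant L ≥ 0. Let φ₁ : [0,T₁] → ℝⁿ and φ₂ : [0,T₂] → ℝⁿ be continuous, set x = φ₁(T₁) and y = φ₂(T₂), and let f̃, g̃₁, …, g̃_m ∈ ℝⁿ and ν ≥ 0 satisfy ‖(f̃ + Σ_{i=1}^m g̃ᵢuᵢ) − v_x(u)‖ ≤ ν for all u ∈ U. Let ū ∈ U maximize u ↦ G(T₂, φ₂, v_y(u)) over U, and let u* ∈ U maximize u ↦ G(T₁, φ₁, f̃ + Σ_{i=1}^m g̃ᵢuᵢ) over U. Then |G(T₂, φ₂, v_y(ū)) − G(T₁, φ₁, f̃ + Σ_{i=1}^m g̃ᵢu*ᵢ)| ≤ L·d((T₁,φ₁),(T₂,φ₂)) + L·M₁(m+1)‖x − y‖ + L·ν. -/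
/-!
The maximum of a function over `U` moves by at most the uniform distance between the functions:
comparing each maximizer with the same control used in the other problem, it suffices to bound
`|G(T₁, φ₁, f̃ + Σ g̃ᵢuᵢ) - G(T₂, φ₂, v_y(u))|` uniformly in `u ∈ U`. The Lipschitz property of `G`
reduces this to bounding `‖(f̃ + Σ g̃ᵢuᵢ) - v_y(u)‖`, which by the triangle inequality through
`v_x(u)` is at most `ν + M₁(m+1)‖x - y‖`; see `norm_controlAffine_sub_le` for the second term.
-/

/-- The distance d((T₁,φ₁),(T₂,φ₂)) = |T₁ − T₂| + max_{t ∈ [0,min(T₁,T₂)]} ‖φ₁(t) − φ₂(t)‖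
between two trajectories. -/
noncomputable def trajDist (n : ℕ) (T₁ T₂ : ℝ)
    (φ₁ φ₂ : ℝ → EuclideanSpace ℝ (Fin n)) : ℝ :=
  |T₁ - T₂| + sSup ((fun t => ‖φ₁ t - φ₂ t‖) '' Set.Icc 0 (min T₁ T₂))

/-- A control-affine velocity with controls in the unit cube changes by at most `(m+1)C` when the
drift and each of the `m` control vectors change by at most `C`. -/
theorem norm_controlAffine_sub_le {E : Type*} [NormedAddCommGroup E] [NormedSpace ℝ E] {m : ℕ}
    {a b : E} {p q : Fin m → E} {C : ℝ} (hab : ‖a - b‖ ≤ C) (hpq : ∀ i, ‖p i - q i‖ ≤ C)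
    {u : Fin m → ℝ} (hu : ∀ i, |u i| ≤ 1) :
    ‖(a + ∑ i, u i • p i) - (b + ∑ i, u i • q i)‖ ≤ (m + 1) * C := by
  have hsum : ‖∑ i, u i • (p i - q i)‖ ≤ m * C := by
    calc ‖∑ i, u i • (p i - q i)‖ ≤ ∑ _i : Fin m, C := by
          refine norm_sum_le_of_le _ fun i _ => ?_
          rw [norm_smul, Real.norm_eq_abs]
          exact (mul_le_of_le_one_left (norm_nonneg _) (hu i)).trans (hpq i)
      _ = m * C := by simp
  have heq : (a + ∑ i, u i • p i) - (b + ∑ i, u i • q i)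
      = (a - b) + ∑ i, u i • (p i - q i) := by
    simp only [smul_sub, Finset.sum_sub_distrib]
    abel
  rw [heq]
  linarith [norm_add_le (a - b) (∑ i, u i • (p i - q i))]

/-- If ū maximizes u ↦ G(T₂,φ₂,v_y(u)) over U and u* maximizes
u ↦ G(T₁,φ₁,f̃ + Σg̃ᵢuᵢ) over U, then
|G(T₂,φ₂,v_y(ū)) − G(T₁,φ₁,f̃ + Σg̃ᵢu*ᵢ)| ≤ L·d + L·M₁(m+1)‖x−y‖ + L·ν. -/
theorem maxima_comparison_bound
    (n m : ℕ) (hm : 1 ≤ m) (M₀ M₁ : ℝ) (hM₀ : 0 ≤ M₀) (hM₁ : 0 ≤ M₁)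
    (f : EuclideanSpace ℝ (Fin n) → EuclideanSpace ℝ (Fin n))
    (g : Fin m → EuclideanSpace ℝ (Fin n) → EuclideanSpace ℝ (Fin n))
    (hf : ∀ x, ‖f x‖ ≤ M₀) (hg : ∀ i x, ‖g i x‖ ≤ M₀)
    (hfL : ∀ x y, ‖f x - f y‖ ≤ M₁ * ‖x - y‖)
    (hgL : ∀ i x y, ‖g i x - g i y‖ ≤ M₁ * ‖x - y‖)
    (G : ℝ → (ℝ → EuclideanSpace ℝ (Fin n)) → EuclideanSpace ℝ (Fin n) → ℝ)
    (L : ℝ) (hL : 0 ≤ L)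
    (hGLip : ∀ T₁ T₂ : ℝ, 0 ≤ T₁ → 0 ≤ T₂ →
      ∀ φ₁ φ₂ : ℝ → EuclideanSpace ℝ (Fin n),
        ContinuousOn φ₁ (Set.Icc 0 T₁) → ContinuousOn φ₂ (Set.Icc 0 T₂) →
        ∀ v₁ v₂ : EuclideanSpace ℝ (Fin n),
          |G T₁ φ₁ v₁ - G T₂ φ₂ v₂| ≤ L * (trajDist n T₁ T₂ φ₁ φ₂ + ‖v₁ - v₂‖))
    (T₁ T₂ : ℝ) (hT₁ : 0 ≤ T₁) (hT₂ : 0 ≤ T₂)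
    (φ₁ φ₂ : ℝ → EuclideanSpace ℝ (Fin n))
    (hφ₁ : ContinuousOn φ₁ (Set.Icc 0 T₁)) (hφ₂ : ContinuousOn φ₂ (Set.Icc 0 T₂))
    (x y : EuclideanSpace ℝ (Fin n)) (hx : x = φ₁ T₁) (hy : y = φ₂ T₂)
    (tf : EuclideanSpace ℝ (Fin n)) (tg : Fin m → EuclideanSpace ℝ (Fin n))
    (ν : ℝ) (hν : 0 ≤ ν)
    (happrox : ∀ u : EuclideanSpace ℝ (Fin m), (∀ i, |u i| ≤ 1) →
      ‖(tf + ∑ i, u i • tg i) - (f x + ∑ i, u i • g i x)‖ ≤ ν)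
    (ubar : EuclideanSpace ℝ (Fin m)) (hubarU : ∀ i, |ubar i| ≤ 1)
    (hubar : ∀ u : EuclideanSpace ℝ (Fin m), (∀ i, |u i| ≤ 1) →
      G T₂ φ₂ (f y + ∑ i, u i • g i y) ≤ G T₂ φ₂ (f y + ∑ i, ubar i • g i y))
    (ustar : EuclideanSpace ℝ (Fin m)) (hustarU : ∀ i, |ustar i| ≤ 1)
    (hustar : ∀ u : EuclideanSpace ℝ (Fin m), (∀ i, |u i| ≤ 1) →
      G T₁ φ₁ (tf + ∑ i, u i • tg i) ≤ G T₁ φ₁ (tf + ∑ i, ustar i • tg i)) :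
    |G T₂ φ₂ (f y + ∑ i, ubar i • g i y) - G T₁ φ₁ (tf + ∑ i, ustar i • tg i)|
      ≤ L * trajDist n T₁ T₂ φ₁ φ₂ + L * (M₁ * (m + 1)) * ‖x - y‖ + L * ν := by
  have key : ∀ u : EuclideanSpace ℝ (Fin m), (∀ i, |u i| ≤ 1) →
      |G T₁ φ₁ (tf + ∑ i, u i • tg i) - G T₂ φ₂ (f y + ∑ i, u i • g i y)|
        ≤ L * trajDist n T₁ T₂ φ₁ φ₂ + L * (M₁ * (m + 1)) * ‖x - y‖ + L * ν := by
    intro u hu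
    have hv : ‖(tf + ∑ i, u i • tg i) - (f y + ∑ i, u i • g i y)‖
        ≤ ν + (m + 1) * (M₁ * ‖x - y‖) :=
      (norm_sub_le_norm_sub_add_norm_sub _ (f x + ∑ i, u i • g i x) _).trans
        (add_le_add (happrox u hu)
          (norm_controlAffine_sub_le (hfL x y) (fun i => hgL i x y) hu))
    calc _ ≤ L * (trajDist n T₁ T₂ φ₁ φ₂
          + ‖(tf + ∑ i, u i • tg i) - (f y + ∑ i, u i • g i y)‖) :=
          hGLip T₁ T₂ hT₁ hT₂ φ₁ φ₂ hφ₁ hφ₂ _ _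
      _ ≤ L * (trajDist n T₁ T₂ φ₁ φ₂ + (ν + (m + 1) * (M₁ * ‖x - y‖))) := by gcongr
      _ = _ := by ring
  have hbar := abs_le.mp (key ubar hubarU)
  have hstar := abs_le.mp (key ustar hustarU)
  have hmaxbar := hubar ustar hustarU
  have hmaxstar := hustar ubar hubarU
  exact abs_le.mpr ⟨by linarith, by linarith⟩
end

section
/- Suppose the goodness function G has Lipschitz constant L ≥ 0. Let φ₁ : [0,T₁] → ℝⁿ and φ₂ : [0,T₂] → ℝⁿ be continuous, set x = φ₁(T₁) and y = φ₂(T₂), and let ν ≥ 0. Let f̃, g̃₁, …, g̃_m ∈ ℝⁿ satisfy ‖(f̃ + Σ_{i=1}^m g̃ᵢuᵢ) − v_x(u)‖ ≤ ν for all u ∈ U, and let u* ∈ U maximize u ↦ G(T₁, φ₁, f̃ + Σ_{i=1}^m g̃ᵢuᵢ) over U. Then for any ū ∈ U maximizing u ↦ G(T₂, φ₂, v_y(u)) over U, |G(T₂, φ₂, v_y(ū)) − G(T₂, φ₂, v_y(u*))| ≤ 2L·d((T₁,φ₁),(T₂,φ₂)) + 2L·M₁(m+1)‖x − y‖ + 2L·ν.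 -/
/-- For a control in the unit sup-norm box, the velocity `v_x(u)` is Lipschitz in `x` with constant
`M₁ (m + 1)`: the drift and each of the `m` control fields contribute `M₁`. -/
theorem norm_control_velocity_sub_le {E : Type*} [NormedAddCommGroup E] [NormedSpace ℝ E]
    {m : ℕ} {M₁ : ℝ} {f : E → E} {g : Fin m → E → E}
    (hfL : ∀ x y, ‖f x - f y‖ ≤ M₁ * ‖x - y‖)
    (hgL : ∀ i x y, ‖g i x - g i y‖ ≤ M₁ * ‖x - y‖)
    (x y : E) (u : Fin m → ℝ) (hu : ∀ i, |u i| ≤ 1) :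
    ‖(f x + ∑ i, u i • g i x) - (f y + ∑ i, u i • g i y)‖ ≤ M₁ * (m + 1) * ‖x - y‖ := by
  have hterm : ∀ i, ‖u i • (g i x - g i y)‖ ≤ M₁ * ‖x - y‖ := fun i => by
    rw [norm_smul, Real.norm_eq_abs]
    exact (mul_le_of_le_one_left (norm_nonneg _) (hu i)).trans (hgL i x y)
  have hsum : ‖∑ i, u i • (g i x - g i y)‖ ≤ m * (M₁ * ‖x - y‖) := by
    simpa using norm_sum_le_of_le Finset.univ fun i _ => hterm i
  calc ‖(f x + ∑ i, u i • g i x) - (f y + ∑ i, u i • g i y)‖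
      = ‖(f x - f y) + ∑ i, u i • (g i x - g i y)‖ := by
        simp only [smul_sub, Finset.sum_sub_distrib]
        rw [add_sub_add_comm]
    _ ≤ M₁ * ‖x - y‖ + m * (M₁ * ‖x - y‖) := norm_add_le_of_le (hfL x y) hsum
    _ = M₁ * (m + 1) * ‖x - y‖ := by ring

/-- **Theorem 2 of the paper.** If u* maximizes the goodness under the
approximately learned dynamics at x with previous trajectory φ₁, then for any ū
maximizing u ↦ G(T₂,φ₂,v_y(u)) over U,
|G(T₂,φ₂,v_y(ū)) − G(T₂,φ₂,v_y(u*))| ≤ 2L·d + 2L·M₁(m+1)‖x−y‖ + 2L·ν. -/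
theorem myopic_suboptimality_bound
    (n m : ℕ) (hm : 1 ≤ m) (M₀ M₁ : ℝ) (hM₀ : 0 ≤ M₀) (hM₁ : 0 ≤ M₁)
    (f : EuclideanSpace ℝ (Fin n) → EuclideanSpace ℝ (Fin n))
    (g : Fin m → EuclideanSpace ℝ (Fin n) → EuclideanSpace ℝ (Fin n))
    (hf : ∀ x, ‖f x‖ ≤ M₀) (hg : ∀ i x, ‖g i x‖ ≤ M₀)
    (hfL : ∀ x y, ‖f x - f y‖ ≤ M₁ * ‖x - y‖)
    (hgL : ∀ i x y, ‖g i x - g i y‖ ≤ M₁ * ‖x - y‖)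
    (G : ℝ → (ℝ → EuclideanSpace ℝ (Fin n)) → EuclideanSpace ℝ (Fin n) → ℝ)
    (L : ℝ) (hL : 0 ≤ L)
    (hGLip : ∀ T₁ T₂ : ℝ, 0 ≤ T₁ → 0 ≤ T₂ →
      ∀ φ₁ φ₂ : ℝ → EuclideanSpace ℝ (Fin n),
        ContinuousOn φ₁ (Set.Icc 0 T₁) → ContinuousOn φ₂ (Set.Icc 0 T₂) →
        ∀ v₁ v₂ : EuclideanSpace ℝ (Fin n),
          |G T₁ φ₁ v₁ - G T₂ φ₂ v₂| ≤ L * (trajDist n T₁ T₂ φ₁ φ₂ + ‖v₁ - v₂‖))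
    (T₁ T₂ : ℝ) (hT₁ : 0 ≤ T₁) (hT₂ : 0 ≤ T₂)
    (φ₁ φ₂ : ℝ → EuclideanSpace ℝ (Fin n))
    (hφ₁ : ContinuousOn φ₁ (Set.Icc 0 T₁)) (hφ₂ : ContinuousOn φ₂ (Set.Icc 0 T₂))
    (x y : EuclideanSpace ℝ (Fin n)) (hx : x = φ₁ T₁) (hy : y = φ₂ T₂)
    (ν : ℝ) (hν : 0 ≤ ν)
    (tf : EuclideanSpace ℝ (Fin n)) (tg : Fin m → EuclideanSpace ℝ (Fin n))
    (happrox : ∀ u : EuclideanSpace ℝ (Fin m), (∀ i, |u i| ≤ 1) →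
      ‖(tf + ∑ i, u i • tg i) - (f x + ∑ i, u i • g i x)‖ ≤ ν)
    (ustar : EuclideanSpace ℝ (Fin m)) (hustarU : ∀ i, |ustar i| ≤ 1)
    (hustar : ∀ u : EuclideanSpace ℝ (Fin m), (∀ i, |u i| ≤ 1) →
      G T₁ φ₁ (tf + ∑ i, u i • tg i) ≤ G T₁ φ₁ (tf + ∑ i, ustar i • tg i)) :
    ∀ ubar : EuclideanSpace ℝ (Fin m), (∀ i, |ubar i| ≤ 1) →
      (∀ u : EuclideanSpace ℝ (Fin m), (∀ i, |u i| ≤ 1) →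
        G T₂ φ₂ (f y + ∑ i, u i • g i y) ≤ G T₂ φ₂ (f y + ∑ i, ubar i • g i y)) →
      |G T₂ φ₂ (f y + ∑ i, ubar i • g i y) - G T₂ φ₂ (f y + ∑ i, ustar i • g i y)|
        ≤ 2 * L * trajDist n T₁ T₂ φ₁ φ₂ + 2 * L * (M₁ * (m + 1)) * ‖x - y‖ + 2 * L * ν := by
  intro ubar hubarU hubar
  have hclose : ∀ u : EuclideanSpace ℝ (Fin m), (∀ i, |u i| ≤ 1) →
      |G T₁ φ₁ (tf + ∑ i, u i • tg i) - G T₂ φ₂ (f y + ∑ i, u i • g i y)|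
        ≤ L * (trajDist n T₁ T₂ φ₁ φ₂ + (ν + M₁ * (m + 1) * ‖x - y‖)) := fun u hu => by
    refine (hGLip T₁ T₂ hT₁ hT₂ φ₁ φ₂ hφ₁ hφ₂ _ _).trans ?_
    gcongr
    exact (norm_sub_le_norm_sub_add_norm_sub _ (f x + ∑ i, u i • g i x) _).trans
      (add_le_add (happrox u hu) (norm_control_velocity_sub_le hfL hgL x y u hu))
  have hbar := (abs_le.mp (hclose ubar hubarU)).1
  have hstar := (abs_le.mp (hclose ustar hustarU)).2
  rw [abs_of_nonneg (sub_nonneg.mpr (hubar ustar hustarU))]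
  linarith [hustar ubar hubarU]
end

section
/- Suppose the goodness function G has Lipschitz constant L ≥ 0. Let φ₁ : [0,T₁] → ℝⁿ and φ₂ : [0,T₂] → ℝⁿ be continuous, set x = φ₁(T₁) and y = φ₂(T₂), and let ν ≥ 0 and δ > 0. Let f̃, g̃₁, …, g̃_m ∈ ℝⁿ satisfy ‖(f̃ + Σ_{i=1}^m g̃ᵢuᵢ) − v_x(u)‖ ≤ ν for all u ∈ U, let u* ∈ U maximize u ↦ G(T₁, φ₁, f̃ + Σ_{i=1}^m g̃ᵢuᵢ) over U, and let ũ ∈ ℝᵐ satisfy ‖ũ‖ ≤ δ. Then for any ū ∈ U maximizing u ↦ G(T₂, φ₂, v_y(u)) over U, |G(T₂, φ₂, v_y(ū)) − G(T₂, φ₂, v_y(u* + ũ))| ≤ 2L·d((T₁,φ₁),(T₂,φ₂)) + 2L·M₁(m+1)‖x − y‖ + 2L·ν + L·M₀(m+1)δ. -/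
theorem trajDist_self (n : ℕ) (T : ℝ) (hT : 0 ≤ T) (φ : ℝ → EuclideanSpace ℝ (Fin n)) :
    trajDist n T T φ φ = 0 := by
  have hne : (Set.Icc (0 : ℝ) T).Nonempty := Set.nonempty_Icc.2 hT
  simp [trajDist, hne.image_const]

theorem norm_sum_smul_le_card_mul {n m : ℕ} (u : Fin m → ℝ) (w : Fin m → EuclideanSpace ℝ (Fin n))
    (a b : ℝ) (ha : 0 ≤ a) (hu : ∀ i, |u i| ≤ a) (hw : ∀ i, ‖w i‖ ≤ b) :
    ‖∑ i, u i • w i‖ ≤ m * (a * b) := by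
  calc ‖∑ i, u i • w i‖ ≤ ∑ _i : Fin m, a * b := by
        refine norm_sum_le_of_le _ fun i _ => ?_
        rw [norm_smul, Real.norm_eq_abs]
        exact mul_le_mul (hu i) (hw i) (norm_nonneg _) ha
    _ = m * (a * b) := by simp

/-- **Corollary 1 of the paper.** With u* as in Theorem 2 and a perturbation
ũ with ‖ũ‖ ≤ δ, for any ū maximizing u ↦ G(T₂,φ₂,v_y(u)) over U,
|G(T₂,φ₂,v_y(ū)) − G(T₂,φ₂,v_y(u*+ũ))| ≤ 2L·d + 2L·M₁(m+1)‖x−y‖ + 2L·ν + L·M₀(m+1)δ. -/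
theorem perturbed_myopic_suboptimality_bound
    (n m : ℕ) (hm : 1 ≤ m) (M₀ M₁ : ℝ) (hM₀ : 0 ≤ M₀) (hM₁ : 0 ≤ M₁)
    (f : EuclideanSpace ℝ (Fin n) → EuclideanSpace ℝ (Fin n))
    (g : Fin m → EuclideanSpace ℝ (Fin n) → EuclideanSpace ℝ (Fin n))
    (hf : ∀ x, ‖f x‖ ≤ M₀) (hg : ∀ i x, ‖g i x‖ ≤ M₀)
    (hfL : ∀ x y, ‖f x - f y‖ ≤ M₁ * ‖x - y‖)
    (hgL : ∀ i x y, ‖g i x - g i y‖ ≤ M₁ * ‖x - y‖)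
    (G : ℝ → (ℝ → EuclideanSpace ℝ (Fin n)) → EuclideanSpace ℝ (Fin n) → ℝ)
    (L : ℝ) (hL : 0 ≤ L)
    (hGLip : ∀ T₁ T₂ : ℝ, 0 ≤ T₁ → 0 ≤ T₂ →
      ∀ φ₁ φ₂ : ℝ → EuclideanSpace ℝ (Fin n),
        ContinuousOn φ₁ (Set.Icc 0 T₁) → ContinuousOn φ₂ (Set.Icc 0 T₂) →
        ∀ v₁ v₂ : EuclideanSpace ℝ (Fin n),
          |G T₁ φ₁ v₁ - G T₂ φ₂ v₂| ≤ L * (trajDist n T₁ T₂ φ₁ φ₂ + ‖v₁ - v₂‖))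
    (T₁ T₂ : ℝ) (hT₁ : 0 ≤ T₁) (hT₂ : 0 ≤ T₂)
    (φ₁ φ₂ : ℝ → EuclideanSpace ℝ (Fin n))
    (hφ₁ : ContinuousOn φ₁ (Set.Icc 0 T₁)) (hφ₂ : ContinuousOn φ₂ (Set.Icc 0 T₂))
    (x y : EuclideanSpace ℝ (Fin n)) (hx : x = φ₁ T₁) (hy : y = φ₂ T₂)
    (ν δ : ℝ) (hν : 0 ≤ ν) (hδ : 0 < δ)
    (tf : EuclideanSpace ℝ (Fin n)) (tg : Fin m → EuclideanSpace ℝ (Fin n))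
    (happrox : ∀ u : EuclideanSpace ℝ (Fin m), (∀ i, |u i| ≤ 1) →
      ‖(tf + ∑ i, u i • tg i) - (f x + ∑ i, u i • g i x)‖ ≤ ν)
    (ustar : EuclideanSpace ℝ (Fin m)) (hustarU : ∀ i, |ustar i| ≤ 1)
    (hustar : ∀ u : EuclideanSpace ℝ (Fin m), (∀ i, |u i| ≤ 1) →
      G T₁ φ₁ (tf + ∑ i, u i • tg i) ≤ G T₁ φ₁ (tf + ∑ i, ustar i • tg i))
    (utilde : EuclideanSpace ℝ (Fin m)) (hutilde : ‖utilde‖ ≤ δ) :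
    ∀ ubar : EuclideanSpace ℝ (Fin m), (∀ i, |ubar i| ≤ 1) →
      (∀ u : EuclideanSpace ℝ (Fin m), (∀ i, |u i| ≤ 1) →
        G T₂ φ₂ (f y + ∑ i, u i • g i y) ≤ G T₂ φ₂ (f y + ∑ i, ubar i • g i y)) →
      |G T₂ φ₂ (f y + ∑ i, ubar i • g i y)
          - G T₂ φ₂ (f y + ∑ i, (ustar + utilde) i • g i y)|
        ≤ 2 * L * trajDist n T₁ T₂ φ₁ φ₂ + 2 * L * (M₁ * (m + 1)) * ‖x - y‖
            + 2 * L * ν + L * (M₀ * (m + 1)) * δ := by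
  intro ubar hubarU hubar
  have hclose : ∀ u : EuclideanSpace ℝ (Fin m), (∀ i, |u i| ≤ 1) →
      |G T₁ φ₁ (tf + ∑ i, u i • tg i) - G T₂ φ₂ (f y + ∑ i, u i • g i y)|
        ≤ L * (trajDist n T₁ T₂ φ₁ φ₂ + (ν + M₁ * (m + 1) * ‖x - y‖)) := by
    intro u hu
    refine (hGLip T₁ T₂ hT₁ hT₂ φ₁ φ₂ hφ₁ hφ₂ _ _).trans ?_
    have hsplit : (tf + ∑ i, u i • tg i) - (f y + ∑ i, u i • g i y)
        = ((tf + ∑ i, u i • tg i) - (f x + ∑ i, u i • g i x))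
          + ((f x - f y) + ∑ i, u i • (g i x - g i y)) := by
      simp only [smul_sub, Finset.sum_sub_distrib]
      abel
    have hsum := norm_sum_smul_le_card_mul (fun i => u i) (fun i => g i x - g i y) 1
      (M₁ * ‖x - y‖) zero_le_one hu (fun i => hgL i x y)
    have hnorm : ‖(tf + ∑ i, u i • tg i) - (f y + ∑ i, u i • g i y)‖
        ≤ ν + M₁ * (m + 1) * ‖x - y‖ := by
      rw [hsplit]
      have h₁ := norm_add_le ((tf + ∑ i, u i • tg i) - (f x + ∑ i, u i • g i x))
        ((f x - f y) + ∑ i, u i • (g i x - g i y))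
      have h₂ := norm_add_le (f x - f y) (∑ i, u i • (g i x - g i y))
      linarith [happrox u hu, hfL x y]
    gcongr
  have hperturb : |G T₂ φ₂ (f y + ∑ i, ustar i • g i y)
      - G T₂ φ₂ (f y + ∑ i, (ustar + utilde) i • g i y)| ≤ L * (m * (δ * M₀)) := by
    refine (hGLip T₂ T₂ hT₂ hT₂ φ₂ φ₂ hφ₂ hφ₂ _ _).trans ?_
    have hdiff : (f y + ∑ i, ustar i • g i y) - (f y + ∑ i, (ustar + utilde) i • g i y)
        = -∑ i, utilde i • g i y := by
      simp only [PiLp.add_apply, add_smul, Finset.sum_add_distrib]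
      abel
    rw [trajDist_self n T₂ hT₂, zero_add, hdiff, norm_neg]
    refine mul_le_mul_of_nonneg_left ?_ hL
    exact norm_sum_smul_le_card_mul (fun i => utilde i) (fun i => g i y) δ M₀ hδ.le
      (fun i => (PiLp.norm_apply_le utilde i).trans hutilde) (fun i => hg i y)
  have hδM : 0 ≤ L * (M₀ * δ) := by positivity
  have hbar := abs_le.1 (hclose ubar hubarU)
  have hstar := abs_le.1 (hclose ustar hustarU)
  have hpert := abs_le.1 hperturb
  have hopt₁ := hustar ubar hubarU
  have hopt₂ := hubar ustar hustarU
  -- Optimality of `ubar` bounds the difference below up to the perturbation cost; the upper bound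
  -- passes to the learned problem and back, using `hclose` at both controls.
  have hK : 0 ≤ L * (trajDist n T₁ T₂ φ₁ φ₂ + (ν + M₁ * (m + 1) * ‖x - y‖)) :=
    (abs_nonneg _).trans (hclose ubar hubarU)
  rw [abs_le]
  constructor <;> linarith
end

section
/- Suppose the goodness function G has Lipschitz constant L ≥ 0, and let 0 < δ ≤ 1 and ε > 0. Let φ : [0,t] → ℝⁿ be continuous, let t₀ ∈ [0,t] satisfy t − t₀ ≤ (m+1)ε, and set x⁰ = φ(t₀) and x = φ(t); assume ‖x − x⁰‖ ≤ M₀(m+1)²ε. Let f̃, g̃₁, …, g̃_m ∈ ℝⁿ satisfy ‖(f̃ + Σ_{i=1}^m g̃ᵢuᵢ) − v_{x⁰}(u)‖ ≤ 2M₀M₁(m+1)³(1 + 4m^{3/2}/δ)ε for all u ∈ U, let u* ∈ U maximize u ↦ G(t₀, φ|_{[0,t₀]}, f̃ + Σ_{i=1}^m g̃ᵢuᵢ) over U, and let u⁺ = u* + Δu with ‖Δu‖ ≤ δ. Then for any ū ∈ U maximizing u ↦ G(t, φ|_{[0,t]}, v_x(u)) over U, |G(t, φ|_{[0,t]}, v_x(ū))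 − G(t, φ|_{[0,t]}, v_x(u⁺))| ≤ 6L(M₀+1)(M₁+1)(m+1)³(1 + 4m√m/δ)ε + L·M₀(m+1)δ. -/
/-- Restrictions of the same trajectory differ only in their duration. -/
lemma trajDist_self_le (n : ℕ) (T₁ T₂ : ℝ) (φ : ℝ → EuclideanSpace ℝ (Fin n)) :
    trajDist n T₁ T₂ φ φ ≤ |T₁ - T₂| := by
  have h : sSup ((fun t => ‖φ t - φ t‖) '' Set.Icc 0 (min T₁ T₂)) ≤ 0 := by
    apply Real.sSup_nonpos
    rintro _ ⟨s, _, rfl⟩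
    simp
  unfold trajDist
  linarith

lemma norm_sum_smul_le {n m : ℕ} {C B : ℝ} (hC : 0 ≤ C) (u : EuclideanSpace ℝ (Fin m))
    (w : Fin m → EuclideanSpace ℝ (Fin n)) (hu : ∀ i, |u i| ≤ C) (hw : ∀ i, ‖w i‖ ≤ B) :
    ‖∑ i, u i • w i‖ ≤ m * (C * B) := by
  calc ‖∑ i, u i • w i‖ ≤ ∑ _i : Fin m, C * B := by
        refine norm_sum_le_of_le _ fun i _ => ?_
        rw [norm_smul, Real.norm_eq_abs]
        exact mul_le_mul (hu i) (hw i) (norm_nonneg _) hC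
    _ = m * (C * B) := by simp

/-- Two control-affine velocities whose coefficients are pairwise `B`-close are
`(m + 1) B`-close at every admissible control. -/
lemma norm_affine_sub_le {n m : ℕ} {B : ℝ} (a b : EuclideanSpace ℝ (Fin n))
    (p q : Fin m → EuclideanSpace ℝ (Fin n)) (hab : ‖a - b‖ ≤ B) (hpq : ∀ i, ‖p i - q i‖ ≤ B)
    (u : EuclideanSpace ℝ (Fin m)) (hu : ∀ i, |u i| ≤ 1) :
    ‖(a + ∑ i, u i • p i) - (b + ∑ i, u i • q i)‖ ≤ (m + 1) * B := by
  have e : (a + ∑ i, u i • p i) - (b + ∑ i, u i • q i)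
      = (a - b) + ∑ i, u i • (p i - q i) := by
    simp only [smul_sub, Finset.sum_sub_distrib]
    abel
  have h := norm_sum_smul_le zero_le_one u (fun i => p i - q i) hu hpq
  rw [e]
  calc _ ≤ ‖a - b‖ + ‖∑ i, u i • (p i - q i)‖ := norm_add_le _ _
    _ ≤ (m + 1) * B := by linarith

/-- **per-time-step form of Theorem 5 of the paper.** At any time t after
the first learn-control cycle, with x⁰ = φ(t₀), x = φ(t), approximately learned dynamics
at x⁰ with error 2M₀M₁(m+1)³(1+4m^{3/2}/δ)ε, u* the maximizer for the learned dynamics,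
and u⁺ = u* + Δu with ‖Δu‖ ≤ δ, for any ū maximizing u ↦ G(t,φ|₀ᵗ,v_x(u)) over U:
|G(t,φ,v_x(ū)) − G(t,φ,v_x(u⁺))| ≤ 6L(M₀+1)(M₁+1)(m+1)³(1+4m√m/δ)ε + LM₀(m+1)δ. -/
theorem learn_control_suboptimality_bound
    (n m : ℕ) (hm : 1 ≤ m) (M₀ M₁ : ℝ) (hM₀ : 0 ≤ M₀) (hM₁ : 0 ≤ M₁)
    (f : EuclideanSpace ℝ (Fin n) → EuclideanSpace ℝ (Fin n))
    (g : Fin m → EuclideanSpace ℝ (Fin n) → EuclideanSpace ℝ (Fin n))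
    (hf : ∀ x, ‖f x‖ ≤ M₀) (hg : ∀ i x, ‖g i x‖ ≤ M₀)
    (hfL : ∀ x y, ‖f x - f y‖ ≤ M₁ * ‖x - y‖)
    (hgL : ∀ i x y, ‖g i x - g i y‖ ≤ M₁ * ‖x - y‖)
    (G : ℝ → (ℝ → EuclideanSpace ℝ (Fin n)) → EuclideanSpace ℝ (Fin n) → ℝ)
    (L : ℝ) (hL : 0 ≤ L)
    (hGLip : ∀ T₁ T₂ : ℝ, 0 ≤ T₁ → 0 ≤ T₂ →
      ∀ φ₁ φ₂ : ℝ → EuclideanSpace ℝ (Fin n),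
        ContinuousOn φ₁ (Set.Icc 0 T₁) → ContinuousOn φ₂ (Set.Icc 0 T₂) →
        ∀ v₁ v₂ : EuclideanSpace ℝ (Fin n),
          |G T₁ φ₁ v₁ - G T₂ φ₂ v₂| ≤ L * (trajDist n T₁ T₂ φ₁ φ₂ + ‖v₁ - v₂‖))
    (δ ε : ℝ) (hδ0 : 0 < δ) (hδ1 : δ ≤ 1) (hε : 0 < ε)
    (t t₀ : ℝ) (ht₀ : t₀ ∈ Set.Icc 0 t) (htt₀ : t - t₀ ≤ (m + 1) * ε)
    (φ : ℝ → EuclideanSpace ℝ (Fin n)) (hφ : ContinuousOn φ (Set.Icc 0 t))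
    (x₀ x : EuclideanSpace ℝ (Fin n)) (hx₀ : x₀ = φ t₀) (hx : x = φ t)
    (hdrift : ‖x - x₀‖ ≤ M₀ * (m + 1) ^ 2 * ε)
    (tf : EuclideanSpace ℝ (Fin n)) (tg : Fin m → EuclideanSpace ℝ (Fin n))
    (happrox : ∀ u : EuclideanSpace ℝ (Fin m), (∀ i, |u i| ≤ 1) →
      ‖(tf + ∑ i, u i • tg i) - (f x₀ + ∑ i, u i • g i x₀)‖
        ≤ 2 * M₀ * M₁ * (m + 1) ^ 3 * (1 + 4 * (m * Real.sqrt m) / δ) * ε)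
    (ustar : EuclideanSpace ℝ (Fin m)) (hustarU : ∀ i, |ustar i| ≤ 1)
    (hustar : ∀ u : EuclideanSpace ℝ (Fin m), (∀ i, |u i| ≤ 1) →
      G t₀ φ (tf + ∑ i, u i • tg i) ≤ G t₀ φ (tf + ∑ i, ustar i • tg i))
    (Δu : EuclideanSpace ℝ (Fin m)) (hΔu : ‖Δu‖ ≤ δ)
    (uplus : EuclideanSpace ℝ (Fin m)) (huplus : uplus = ustar + Δu) :
    ∀ ubar : EuclideanSpace ℝ (Fin m), (∀ i, |ubar i| ≤ 1) →
      (∀ u : EuclideanSpace ℝ (Fin m), (∀ i, |u i| ≤ 1) →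
        G t φ (f x + ∑ i, u i • g i x) ≤ G t φ (f x + ∑ i, ubar i • g i x)) →
      |G t φ (f x + ∑ i, ubar i • g i x) - G t φ (f x + ∑ i, uplus i • g i x)|
        ≤ 6 * L * (M₀ + 1) * (M₁ + 1) * (m + 1) ^ 3 * (1 + 4 * (m * Real.sqrt m) / δ) * ε
            + L * M₀ * (m + 1) * δ := by
  intro ubar hubar hmax
  obtain ⟨h0, h1⟩ := ht₀
  have ht : 0 ≤ t := h0.trans h1
  have hφ₀ : ContinuousOn φ (Set.Icc 0 t₀) := hφ.mono (Set.Icc_subset_Icc_right h1)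
  set K : ℝ := 1 + 4 * (m * Real.sqrt m) / δ with hK
  have hK1 : 1 ≤ K := by
    rw [hK]
    have : 0 ≤ 4 * (m * Real.sqrt m) / δ := by positivity
    linarith
  have hdyn : ∀ u : EuclideanSpace ℝ (Fin m), (∀ i, |u i| ≤ 1) →
      ‖(f x + ∑ i, u i • g i x) - (f x₀ + ∑ i, u i • g i x₀)‖
        ≤ (m + 1) * (M₁ * (M₀ * (m + 1) ^ 2 * ε)) := fun u hu =>
    norm_affine_sub_le _ _ _ _
      ((hfL x x₀).trans (mul_le_mul_of_nonneg_left hdrift hM₁))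
      (fun i => (hgL i x x₀).trans (mul_le_mul_of_nonneg_left hdrift hM₁)) u hu
  have hclose : ∀ u : EuclideanSpace ℝ (Fin m), (∀ i, |u i| ≤ 1) →
      |G t φ (f x + ∑ i, u i • g i x) - G t₀ φ (tf + ∑ i, u i • tg i)|
        ≤ L * (3 * (M₀ + 1) * (M₁ + 1) * (m + 1) ^ 3 * K * ε) := by
    intro u hu
    refine (hGLip t t₀ ht h0 φ φ hφ hφ₀ _ _).trans (mul_le_mul_of_nonneg_left ?_ hL)
    have hd := trajDist_self_le n t t₀ φ
    rw [abs_of_nonneg (sub_nonneg.2 h1)] at hd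
    have hv := norm_sub_le_norm_sub_add_norm_sub (f x + ∑ i, u i • g i x)
      (f x₀ + ∑ i, u i • g i x₀) (tf + ∑ i, u i • tg i)
    rw [norm_sub_rev (f x₀ + ∑ i, u i • g i x₀)] at hv
    have ha := happrox u hu
    have hb := hdyn u hu
    set P : ℝ := (m + 1) ^ 3 * ε with hP
    have hP0 : 0 ≤ P := by positivity
    have hPK : P ≤ P * K := le_mul_of_one_le_right hP0 hK1
    have hmP : (m + 1) * ε ≤ P :=
      mul_le_mul_of_nonneg_right (le_self_pow₀ (by linarith [m.cast_nonneg (α := ℝ)]) (by norm_num))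
        hε.le
    have hMM : 0 ≤ M₀ * M₁ := mul_nonneg hM₀ hM₁
    have hbP : M₀ * M₁ * P ≤ M₀ * M₁ * (P * K) := mul_le_mul_of_nonneg_left hPK hMM
    have e1 : ((m : ℝ) + 1) * (M₁ * (M₀ * (m + 1) ^ 2 * ε)) = M₀ * M₁ * P := by rw [hP]; ring
    have e2 : 2 * M₀ * M₁ * ((m : ℝ) + 1) ^ 3 * K * ε = 2 * (M₀ * M₁ * (P * K)) := by
      rw [hP]; ring
    have e3 : 3 * (M₀ + 1) * (M₁ + 1) * ((m : ℝ) + 1) ^ 3 * K * ε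
        = 3 * (M₀ * M₁ * (P * K)) + 3 * (M₀ * (P * K)) + 3 * (M₁ * (P * K)) + 3 * (P * K) := by
      rw [hP]; ring
    have hPK0 : 0 ≤ P * K := hP0.trans hPK
    have p1 := mul_nonneg hM₀ hPK0
    have p2 := mul_nonneg hM₁ hPK0
    linarith
  have hpert : |G t φ (f x + ∑ i, ustar i • g i x) - G t φ (f x + ∑ i, uplus i • g i x)|
      ≤ L * M₀ * (m + 1) * δ := by
    refine (hGLip t t ht ht φ φ hφ hφ _ _).trans ?_
    have hd := trajDist_self_le n t t φ
    rw [sub_self, abs_zero] at hd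
    have e : (f x + ∑ i, ustar i • g i x) - (f x + ∑ i, uplus i • g i x)
        = -∑ i, Δu i • g i x := by
      simp only [huplus, PiLp.add_apply, add_smul, Finset.sum_add_distrib]
      abel
    have hs := norm_sum_smul_le hδ0.le Δu (fun i => g i x)
      (fun i => (PiLp.norm_apply_le Δu i).trans hΔu) (fun i => hg i x)
    rw [e, norm_neg]
    have : 0 ≤ δ * M₀ := mul_nonneg hδ0.le hM₀
    calc _ ≤ L * ((m + 1) * (δ * M₀)) := mul_le_mul_of_nonneg_left (by linarith) hL
      _ = _ := by ring
  have c1 := abs_le.1 (hclose ubar hubar)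
  have c2 := abs_le.1 (hclose ustar hustarU)
  have c3 := abs_le.1 hpert
  have c4 := hustar ubar hubar
  have c5 := hmax ustar hustarU
  have e : 6 * L * (M₀ + 1) * (M₁ + 1) * ((m : ℝ) + 1) ^ 3 * K * ε
      = 2 * (L * (3 * (M₀ + 1) * (M₁ + 1) * (m + 1) ^ 3 * K * ε)) := by ring
  rw [e, abs_le]
  constructor <;> linarith [abs_nonneg (G t φ (f x + ∑ i, ubar i • g i x)
    - G t₀ φ (tf + ∑ i, ubar i • tg i)), hclose ubar hubar]
end
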